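/- Let n and k be natural numbers with k ≤ n. If y is drawn uniformly at random from the set Fact(n) of n-factoradics, then A_k(y) is distributed uniformly at random over the set of n-bit strings of Hamming weight k; that is, the pushforward of the uniform probability distribution on Fact(n) under A_k is the uniform probability distribution on the C(n,k) bit strings of length n with exactly k ones. -/

import Mathlib

/-- An `n`-factoradic: a sequence `(y_{n-1}, …, y_0)` with `0 ≤ y_j ≤ j`, modeled as a
dependent function assigning to each `j : Fin n` an element of `Fin (j+1)`. -/
def Factoradic (n : ℕ) : Type := ∀ j : Fin n, Fin (j.val + 1)

instance (n : ℕ) : Fintype (Factoradic n) := by unfold Factoradic; infer_instance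
instance (n : ℕ) : DecidableEq (Factoradic n) := by unfold Factoradic; infer_instance
instance (n : ℕ) : Nonempty (Factoradic n) := by unfold Factoradic; infer_instance

/-- The value `y_j` of a factoradic at position `j` (and `0` for out-of-range `j`). -/
def factVal {n : ℕ} (y : Factoradic n) (j : ℕ) : ℕ :=
  if h : j < n then (y ⟨j, h⟩).val else 0

/-- `akWeight k n y t` is the number of ones among the first `t` produced bits of the
string `A_k(y)`, i.e. among the bits at positions `n−1, n−2, …, n−t` (produced from
left to right).  At step `t` the bit produced (at position `n−1−t`) is `1` iff
`y (n−1−t) < k − (current weight)`. -/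
def akWeight (k n : ℕ) (y : ℕ → ℕ) : ℕ → ℕ
  | 0 => 0
  | t + 1 =>
    akWeight k n y t + (if y (n - 1 - t) < k - akWeight k n y t then 1 else 0)

/-- The bit of `A_k(y)` at position `p` (for `p < n`): letting `H_p = akWeight k n y (n−1−p)`
be the number of ones among the already-produced bits at positions `> p`, the bit is `1`
iff `y p < k − H_p`. -/
def akBit (k n : ℕ) (y : ℕ → ℕ) (p : ℕ) : Bool :=
  decide (y p < k - akWeight k n y (n - 1 - p))

/-- The `n`-bit string `A_k(y)` produced from an `n`-factoradic `y`. -/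
def ak (n k : ℕ) (y : Factoradic n) : Fin n → Bool :=
  fun p => akBit k n (factVal y) p.val

theorem fact_card (n : ℕ) : Fintype.card (Factoradic n) = n.factorial := by
  have h : Fintype.card (Factoradic n) = Fintype.card (∀ j : Fin n, Fin (j.val + 1)) :=
    Fintype.card_congr (Equiv.refl _)
  rw [h, Fintype.card_pi]
  simp only [Fintype.card_fin]
  rw [Fin.prod_univ_eq_prod_range (fun i => i + 1) n, Finset.prod_range_add_one_eq_factorial]

theorem akWeight_congr (k n : ℕ) (y z : ℕ → ℕ) (h : ∀ j < n, y j = z j) (t : ℕ) (ht : t ≤ n) :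
    akWeight k n y t = akWeight k n z t := by
  induction t with
  | zero => rfl
  | succ t ih =>
    simp only [akWeight]
    rw [ih (by omega), h _ (by omega)]

theorem akWeight_shift (k n b : ℕ) (y : ℕ → ℕ) (hb : b = if y n < k then 1 else 0) (t : ℕ) :
    akWeight k (n+1) y (t+1) = b + akWeight (k-b) n y t := by
  induction t with
  | zero => simp [akWeight, hb]
  | succ t ih =>
    rw [akWeight, ih, akWeight]
    have e : n + 1 - 1 - (t+1) = n - 1 - t := by omega
    rw [e, Nat.sub_sub k b, add_assoc]

/-- append a top digit -/
def fsnoc (n : ℕ) : Fin (n+1) × Factoradic n ≃ Factoradic (n+1) :=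
  Fin.snocEquiv (fun j : Fin (n+1) => Fin (j.val+1))

theorem fsnoc_last (n : ℕ) (a : Fin (n+1)) (y : Factoradic n) :
    factVal (fsnoc n (a, y)) n = a.val := by
  have : fsnoc n (a, y) (Fin.last n) = a :=
    Fin.snoc_last (α := fun j : Fin (n+1) => Fin (j.val+1)) a y
  unfold factVal
  rw [dif_pos (Nat.lt_succ_self n)]
  exact congrArg Fin.val this

theorem fsnoc_lt (n : ℕ) (a : Fin (n+1)) (y : Factoradic n) (j : ℕ) (hj : j < n) :
    factVal (fsnoc n (a, y)) j = factVal y j := by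
  have : fsnoc n (a, y) (Fin.castSucc ⟨j, hj⟩) = y ⟨j, hj⟩ :=
    Fin.snoc_castSucc (α := fun j : Fin (n+1) => Fin (j.val+1)) a y ⟨j, hj⟩
  unfold factVal
  rw [dif_pos (Nat.lt_succ_of_lt hj), dif_pos hj]
  exact congrArg Fin.val this

theorem ak_fsnoc (n k : ℕ) (a : Fin (n+1)) (y : Factoradic n) (s : Fin (n+1) → Bool) :
    ak (n+1) k (fsnoc n (a, y)) = s ↔
      decide (a.val < k) = s (Fin.last n) ∧
        ak n (k - if s (Fin.last n) = true then 1 else 0) y = fun i => s i.castSucc := by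
  have h1 : ak (n+1) k (fsnoc n (a, y)) (Fin.last n) = decide (a.val < k) := by
    simp [ak, akBit, akWeight, fsnoc_last]
  have h2 : ∀ i : Fin n, ak (n+1) k (fsnoc n (a, y)) i.castSucc
      = ak n (k - if a.val < k then 1 else 0) y i := by
    intro i
    have hi := i.isLt
    simp only [ak, akBit, Fin.val_castSucc]
    rw [decide_eq_decide]
    have e : n + 1 - 1 - i.val = (n - 1 - i.val) + 1 := by omega
    rw [e, akWeight_shift k n (if a.val < k then 1 else 0) _ (by rw [fsnoc_last]),
      akWeight_congr _ n _ (factVal y) (fun j hj => fsnoc_lt n a y j hj) _ (by omega),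
      fsnoc_lt n a y _ hi, Nat.sub_sub k]
  constructor
  · rintro rfl
    refine ⟨h1.symm, ?_⟩
    funext i
    rw [h2, h1]
    simp
  · rintro ⟨ha, hy⟩
    funext i
    refine Fin.lastCases ?_ (fun i => ?_) i
    · rw [h1, ha]
    · rw [h2, ← congrFun hy i, ← ha]
      simp

theorem ones_succ (n : ℕ) (s : Fin (n+1) → Bool) :
    (Finset.univ.filter (fun p => s p = true)).card =
      (Finset.univ.filter (fun p : Fin n => s p.castSucc = true)).card +
        if s (Fin.last n) = true then 1 else 0 := by
  simp only [Finset.card_filter]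
  rw [Fin.sum_univ_castSucc]

theorem ones_le (n : ℕ) (s : Fin n → Bool) :
    (Finset.univ.filter (fun p => s p = true)).card ≤ n := by
  simpa using Finset.card_le_univ (Finset.univ.filter (fun p => s p = true))

theorem top_count (n k : ℕ) (hk : k ≤ n+1) (b : Bool) :
    (Finset.univ.filter (fun a : Fin (n+1) => decide (a.val < k) = b)).card =
      if b = true then k else n + 1 - k := by
  have h : (Finset.univ.filter (fun a : Fin (n+1) => a.val < k)).card = k := by
    rw [Fin.card_filter_val_lt]; omega
  cases b
  · have h2 := Finset.card_filter_add_card_filter_not (s := (Finset.univ : Finset (Fin (n+1))))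
      (fun a => a.val < k)
    rw [h, Finset.card_univ, Fintype.card_fin] at h2
    simp only [decide_eq_false_iff_not, Bool.false_eq_true, if_false]
    omega
  · simpa using h

theorem ak_count (n : ℕ) : ∀ (k : ℕ), k ≤ n → ∀ s : Fin n → Bool,
    (Finset.univ.filter (fun y : Factoradic n => ak n k y = s)).card =
      if (Finset.univ.filter (fun p => s p = true)).card = k then
        k.factorial * (n-k).factorial else 0 := by
  induction n with
  | zero =>
    intro k hk s
    obtain rfl : k = 0 := by omega
    have : ∀ y : Factoradic 0, ak 0 0 y = s := fun y => Subsingleton.elim _ _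
    simp [this, fact_card]
  | succ n ih =>
    intro k hk s
    have step : (Finset.univ.filter (fun y : Factoradic (n+1) => ak (n+1) k y = s)).card =
        (Finset.univ.filter (fun a : Fin (n+1) => decide (a.val < k) = s (Fin.last n))).card *
        (Finset.univ.filter (fun y : Factoradic n =>
          ak n (k - if s (Fin.last n) = true then 1 else 0) y = fun i => s i.castSucc)).card := by
      rw [← Finset.card_product]
      symm
      refine Finset.card_equiv (fsnoc n) ?_
      rintro ⟨a, y⟩
      simp only [Finset.mem_product, Finset.mem_filter, Finset.mem_univ, true_and]
      exact (ak_fsnoc n k a y s).symm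
    rw [step, top_count n k hk, ones_succ]
    have hle := ones_le n (fun i => s i.castSucc)
    cases hs : s (Fin.last n)
    · simp only [Bool.false_eq_true, if_false, Nat.sub_zero, add_zero]
      rcases Nat.lt_or_ge n k with h | h
      · rw [if_neg (by omega)]
        have : n + 1 - k = 0 := by omega
        simp [this]
      · rw [ih k h]
        have : n + 1 - k = (n - k) + 1 := by omega
        rw [this, Nat.factorial_succ]
        split_ifs
        · ring
        · rfl
    · simp only [if_true]
      rcases k with _ | k
      · simp
      · rw [Nat.add_sub_cancel, ih k (by omega), Nat.factorial_succ]
        simp only [Nat.add_right_cancel_iff, Nat.add_sub_add_right]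
        split_ifs
        · ring
        · rfl

/-- For `k ≤ n`, if `y` is drawn uniformly at random from the `n`-factoradics, then
`A_k(y)` is uniformly distributed over the `n`-bit strings of Hamming weight `k`:
the pushforward of the uniform distribution on `Fact(n)` under `A_k` assigns
probability `1 / C(n,k)` to every weight-`k` string and `0` to every other string. -/
theorem ak_pushforward_uniform (n k : ℕ) (hkn : k ≤ n) (s : Fin n → Bool) :
    (PMF.map (ak n k) (PMF.uniformOfFintype (Factoradic n))) s =
      if (Finset.univ.filter (fun p => s p = true)).card = k then
        (1 : ENNReal) / (Nat.choose n k) else 0 := by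
  rw [PMF.map_apply, tsum_fintype]
  simp only [PMF.uniformOfFintype_apply]
  rw [← Finset.sum_filter, Finset.sum_const, fact_card]
  have e : (Finset.univ.filter (fun y : Factoradic n => s = ak n k y)).card = _ :=
    (congrArg Finset.card (Finset.filter_congr (fun y _ => eq_comm))).trans (ak_count n k hkn s)
  have h := Nat.choose_mul_factorial_mul_factorial hkn
  have hc : (n.choose k : ENNReal) ≠ 0 := by
    exact_mod_cast (Nat.choose_pos hkn).ne'
  have hf : ((k.factorial * (n-k).factorial : ℕ) : ENNReal) ≠ 0 := by
    exact_mod_cast (Nat.mul_pos (Nat.factorial_pos k) (Nat.factorial_pos (n-k))).ne'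
  have key : ((k.factorial * (n-k).factorial : ℕ) : ENNReal) * ((n.factorial : ℕ) : ENNReal)⁻¹
      = 1 / (n.choose k : ENNReal) := by
    rw [← h, mul_assoc, Nat.cast_mul (n.choose k),
      ENNReal.mul_inv (Or.inl hc) (Or.inl (ENNReal.natCast_ne_top _)), mul_left_comm,
      ENNReal.mul_inv_cancel hf (ENNReal.natCast_ne_top _), mul_one, one_div]
  rw [nsmul_eq_mul]
  split_ifs with hw
  · rw [if_pos hw] at e
    rw [← key, ← e]
  · rw [if_neg hw] at e
    convert zero_mul _
    rw [Nat.cast_eq_zero, ← e]
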